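/- If H is a 4-uniform hypergraph, then the Staller-start game transversal number satisfies τ_g'(H) ≤ (1/252)(71 n(H) + 71 m(H) + 110). -/

import Mathlib

variable {V : Type} [Fintype V] [DecidableEq V]

/-- The set of legal moves in the transversal game with uncovered edge set `E`:
the vertices hitting at least one uncovered edge. -/
def playable (E : Finset (Finset V)) : Finset V :=
  Finset.univ.filter (fun v => ∃ e ∈ E, v ∈ e)

/-- The number of moves remaining in the transversal game with uncovered edge set `E`
under optimal play, where `ehTurn = true` iff Edge-hitter (the minimizer) moves next;
Staller (the maximizer) moves next iff `ehTurn = false`.  Each move must hit at least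
one uncovered edge, and the game ends when no uncovered edge remains. -/
def gameVal (ehTurn : Bool) (E : Finset (Finset V)) : ℕ :=
  if h : (playable E).Nonempty then
    1 +
      (if ehTurn then
        (playable E).attach.inf' (Finset.attach_nonempty_iff.mpr h)
          (fun v => gameVal (!ehTurn) (E.filter (fun e => v.1 ∉ e)))
      else
        (playable E).attach.sup' (Finset.attach_nonempty_iff.mpr h)
          (fun v => gameVal (!ehTurn) (E.filter (fun e => v.1 ∉ e))))
  else 0
termination_by E.card
decreasing_by
  all_goals
    obtain ⟨v, hv⟩ := v
    simp only [playable, Finset.mem_filter, Finset.mem_univ, true_and] at hv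
    obtain ⟨e, he, hve⟩ := hv
    exact Finset.card_lt_card (Finset.filter_ssubset.mpr ⟨e, he, by simp [hve]⟩)

/-- The game transversal number `τ_g`: Edge-hitter makes the first move. -/
def gameTransversalNum (E : Finset (Finset V)) : ℕ := gameVal true E

/-- The Staller-start game transversal number `τ_g'`: Staller makes the first move. -/
def stallerGameTransversalNum (E : Finset (Finset V)) : ℕ := gameVal false E

/-- The transversal number `τ`: the minimum size of a set of vertices meeting all edges. -/
noncomputable def transversalNum (E : Finset (Finset V)) : ℕ :=
  sInf {n | ∃ T : Finset V, (∀ e ∈ E, ∃ v ∈ T, v ∈ e) ∧ T.card = n}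

/-- Uncovered edges after playing `v`. -/
def del (E : Finset (Finset V)) (v : V) : Finset (Finset V) := E.filter (fun e => v ∉ e)

/-- Degree of a vertex. -/
def dg (E : Finset (Finset V)) (v : V) : ℕ := (E.filter (fun e => v ∈ e)).card

/-- Vertices of degree two. -/
def N2 (E : Finset (Finset V)) : Finset V := Finset.univ.filter (fun v => dg E v = 2)

theorem mem_playable {E : Finset (Finset V)} {v : V} : v ∈ playable E ↔ ∃ e ∈ E, v ∈ e := by
  simp [playable]

theorem mem_del {E : Finset (Finset V)} {v : V} {e : Finset V} :
    e ∈ del E v ↔ e ∈ E ∧ v ∉ e := by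
  simp [del]

theorem mem_N2 {E : Finset (Finset V)} {v : V} : v ∈ N2 E ↔ dg E v = 2 := by
  simp [N2]

theorem gv_true_le {E : Finset (Finset V)} {v : V} (hv : v ∈ playable E) :
    gameVal true E ≤ 1 + gameVal false (del E v) := by
  rw [gameVal]
  rw [dif_pos ⟨v, hv⟩]
  simp only [if_true, Bool.not_true]
  have := Finset.inf'_le (f := fun v : {x // x ∈ playable E} =>
    gameVal false (E.filter (fun e => v.1 ∉ e))) (Finset.mem_attach _ ⟨v, hv⟩)
  exact Nat.add_le_add_left this 1

theorem gv_false_cases (E : Finset (Finset V)) :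
    gameVal false E = 0 ∨ ∃ w ∈ playable E, gameVal false E = 1 + gameVal true (del E w) := by
  rw [gameVal]
  split_ifs with h h2
  · cases h2
  · right
    obtain ⟨w, _, hw⟩ := Finset.exists_mem_eq_sup' (Finset.attach_nonempty_iff.mpr h)
      (fun v : {x // x ∈ playable E} => gameVal (!false) (E.filter (fun e => v.1 ∉ e)))
    exact ⟨w.1, w.2, by rw [hw]; rfl⟩
  · left; rfl

theorem gv_true_zero {E : Finset (Finset V)} (h : ¬ (playable E).Nonempty) :
    gameVal true E = 0 := by
  rw [gameVal, dif_neg h]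

theorem card_del (E : Finset (Finset V)) (v : V) : (del E v).card + dg E v = E.card := by
  unfold del dg
  rw [add_comm]
  exact Finset.card_filter_add_card_filter_not (s := E) (fun e => v ∈ e)

theorem dg_pos {E : Finset (Finset V)} {v : V} (h : v ∈ playable E) : 0 < dg E v := by
  obtain ⟨e, he, hv⟩ := mem_playable.1 h
  exact Finset.card_pos.2 ⟨e, by simp [he, hv]⟩

theorem playable_of_dg {E : Finset (Finset V)} {v : V} (h : 0 < dg E v) : v ∈ playable E := by
  obtain ⟨e, he⟩ := Finset.card_pos.1 h
  simp at he
  exact mem_playable.2 ⟨e, he⟩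

theorem dg_del_le (E : Finset (Finset V)) (v x : V) : dg (del E v) x ≤ dg E x := by
  apply Finset.card_le_card
  intro e
  simp [mem_del]
  tauto

theorem playable_del {E : Finset (Finset V)} {v : V} (h : v ∈ playable E) :
    (playable (del E v)).card + 1 ≤ (playable E).card := by
  apply Finset.card_lt_card
  rw [Finset.ssubset_iff_of_subset]
  · refine ⟨v, h, ?_⟩
    rw [mem_playable]
    rintro ⟨e, he, hv⟩
    exact (mem_del.1 he).2 hv
  · intro x
    simp only [mem_playable, mem_del]
    rintro ⟨e, he, hx⟩
    exact ⟨e, he.1, hx⟩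

/-- One round of the game. -/
theorem game_round {E : Finset (Finset V)} {v : V} (hv : v ∈ playable E) :
    gameVal true E ≤ 1 ∨ ∃ w ∈ playable (del E v),
      gameVal true E ≤ 2 + gameVal true (del (del E v) w) := by
  have h := gv_true_le hv
  rcases gv_false_cases (del E v) with h0 | ⟨w, hw, h0⟩
  · left; omega
  · right; exact ⟨w, hw, by omega⟩

/-- Generic linear phase. -/
theorem linear_phase (a b K k j : ℕ) (hk : 1 ≤ k) (hK : 2 * K ≤ 2 * a + (k + 1) * b)
    (base : ∀ E : Finset (Finset V), (∀ e ∈ E, e.card = 4) → (∀ v, dg E v < k) →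
      (∀ v, dg E v ≤ j) → K * gameVal true E ≤ a * (playable E).card + b * E.card) :
    ∀ n, ∀ E : Finset (Finset V), E.card ≤ n → (∀ e ∈ E, e.card = 4) → (∀ v, dg E v ≤ j) →
      K * gameVal true E ≤ a * (playable E).card + b * E.card := by
  intro n
  induction n with
  | zero =>
    intro E hE h4 hj
    have : E = ∅ := Finset.card_eq_zero.1 (by omega)
    subst this
    apply base _ h4 _ hj
    intro v; simp [dg]; omega
  | succ n ih =>
    intro E hE h4 hj
    by_cases hd : ∀ v, dg E v < k
    · exact base E h4 hd hj
    push Not at hd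
    obtain ⟨v, hv⟩ := hd
    have hvp : v ∈ playable E := playable_of_dg (by omega)
    have c1 := card_del E v
    have p1 := playable_del hvp
    rcases game_round hvp with h1 | ⟨w, hw, h1⟩
    · have e1 : K * gameVal true E ≤ K * 1 := Nat.mul_le_mul_left _ h1
      have e2 : a * 1 ≤ a * (playable E).card := Nat.mul_le_mul_left _ (by omega)
      have e3 : b * k ≤ b * E.card := Nat.mul_le_mul_left _ (by omega)
      have e4 : b * 1 ≤ b * k := Nat.mul_le_mul_left _ hk
      nlinarith
    · have c2 := card_del (del E v) w
      have p2 := playable_del hw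
      have d2 := dg_pos hw
      have := ih (del (del E v) w) (by omega)
        (fun e he => h4 e (mem_del.1 (mem_del.1 he).1).1)
        (fun x => ((dg_del_le _ _ _).trans (dg_del_le _ _ _)).trans (hj x))
      have e1 : K * gameVal true E ≤ K * (2 + gameVal true (del (del E v) w)) :=
        Nat.mul_le_mul_left _ h1
      have e2 : a * ((playable (del (del E v) w)).card + 2) ≤ a * (playable E).card :=
        Nat.mul_le_mul_left _ (by omega)
      have e3 : b * ((del (del E v) w).card + (k + 1)) ≤ b * E.card :=
        Nat.mul_le_mul_left _ (by omega)
      nlinarith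

theorem sum_dg {E : Finset (Finset V)} (h4 : ∀ e ∈ E, e.card = 4) :
    ∑ v ∈ playable E, dg E v = 4 * E.card := by
  have h : ∑ v ∈ playable E, dg E v = ∑ e ∈ E, e.card := by
    unfold dg
    refine (Finset.sum_card_bipartiteAbove_eq_sum_card_bipartiteBelow (fun (v : V) (e : Finset V) => v ∈ e)).trans ?_
    apply Finset.sum_congr rfl
    intro e he
    congr 1
    ext v
    simp only [Finset.bipartiteBelow, Finset.mem_filter, mem_playable]
    exact ⟨fun h => h.2, fun h => ⟨⟨e, he, h⟩, h⟩⟩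
  rw [h, Finset.sum_congr rfl h4]
  simp [mul_comm]

theorem edges_le {E : Finset (Finset V)} (h4 : ∀ e ∈ E, e.card = 4) {k : ℕ}
    (hk : ∀ v, dg E v ≤ k) : 4 * E.card ≤ k * (playable E).card := by
  rw [← sum_dg h4, mul_comm]
  have := Finset.sum_le_card_nsmul (playable E) (dg E) k (fun v _ => hk v)
  simpa using this

/-! ### Phase 2 -/

theorem gv_le_card : ∀ n, ∀ E : Finset (Finset V), E.card ≤ n → gameVal true E ≤ E.card := by
  intro n
  induction n with
  | zero =>
    intro E hE
    rw [gv_true_zero]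
    · omega
    · rintro ⟨v, hv⟩
      have := dg_pos hv
      have := card_del E v
      omega
  | succ n ih =>
    intro E hE
    by_cases hp : (playable E).Nonempty
    · obtain ⟨v, hv⟩ := hp
      have := dg_pos hv
      have := card_del E v
      rcases game_round hv with h1 | ⟨w, hw, h1⟩
      · omega
      · have := dg_pos hw
        have := card_del (del E v) w
        have := ih (del (del E v) w) (by omega)
        omega
    · rw [gv_true_zero hp]; omega

/-- with max degree two, three edges through a vertex are not distinct -/
theorem three_edges {E : Finset (Finset V)} (h2 : ∀ v, dg E v ≤ 2) {x : V} {e f g : Finset V}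
    (he : e ∈ E) (hf : f ∈ E) (hg : g ∈ E) (xe : x ∈ e) (xf : x ∈ f) (xg : x ∈ g)
    (hef : e ≠ f) : g = e ∨ g = f := by
  by_contra hc
  push Not at hc
  have h3 : ({e, f, g} : Finset (Finset V)).card = 3 :=
    Finset.card_eq_three.2 ⟨e, f, g, hef, hc.1.symm, hc.2.symm, rfl⟩
  have : ({e, f, g} : Finset (Finset V)) ⊆ E.filter (fun e => x ∈ e) := by
    intro y hy
    simp only [Finset.mem_insert, Finset.mem_singleton] at hy
    rcases hy with rfl | rfl | rfl <;> simp [*]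
  have := Finset.card_le_card this
  have := h2 x
  unfold dg at this
  omega

theorem mem_N2_of {E : Finset (Finset V)} (h2 : ∀ v, dg E v ≤ 2) {x : V} {e f : Finset V}
    (he : e ∈ E) (hf : f ∈ E) (xe : x ∈ e) (xf : x ∈ f) (hef : e ≠ f) : x ∈ N2 E := by
  rw [mem_N2]
  have : ({e, f} : Finset (Finset V)) ⊆ E.filter (fun e => x ∈ e) := by
    intro y hy
    simp only [Finset.mem_insert, Finset.mem_singleton] at hy
    rcases hy with rfl | rfl <;> simp [*]
  have := Finset.card_le_card this
  rw [Finset.card_pair hef] at this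
  have := h2 x
  unfold dg at *
  omega

theorem exists_of_mem_N2 {E : Finset (Finset V)} {x : V} (hx : x ∈ N2 E) :
    ∃ e ∈ E, ∃ f ∈ E, e ≠ f ∧ x ∈ e ∧ x ∈ f := by
  rw [mem_N2, dg, Finset.card_eq_two] at hx
  obtain ⟨a, b, hab, h⟩ := hx
  have ha : a ∈ E.filter (fun e => x ∈ e) := by rw [h]; simp
  have hb : b ∈ E.filter (fun e => x ∈ e) := by rw [h]; simp
  simp at ha hb
  exact ⟨a, ha.1, b, hb.1, hab, ha.2, hb.2⟩

theorem mem_N2_del {E : Finset (Finset V)} (h2 : ∀ v, dg E v ≤ 2) {x v : V} :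
    x ∈ N2 (del E v) ↔ x ∈ N2 E ∧ ∀ e ∈ E, v ∈ e → x ∉ e := by
  constructor
  · intro h
    obtain ⟨e, he, f, hf, hef, xe, xf⟩ := exists_of_mem_N2 h
    rw [mem_del] at he hf
    refine ⟨mem_N2_of h2 he.1 hf.1 xe xf hef, ?_⟩
    intro g hg hv hx
    rcases three_edges h2 he.1 hf.1 hg xe xf hx hef with rfl | rfl
    · exact he.2 hv
    · exact hf.2 hv
  · rintro ⟨h, h'⟩
    obtain ⟨e, he, f, hf, hef, xe, xf⟩ := exists_of_mem_N2 h
    exact mem_N2_of (fun y => (dg_del_le _ _ _).trans (h2 y))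
      (mem_del.2 ⟨he, fun hv => h' e he hv xe⟩) (mem_del.2 ⟨hf, fun hv => h' f hf hv xf⟩) xe xf hef

/-- Number of degree-two vertices destroyed by the move `v`. -/
def kil (E : Finset (Finset V)) (v : V) : ℕ := (N2 E \ N2 (del E v)).card

theorem kil_add {E : Finset (Finset V)} (h2 : ∀ v, dg E v ≤ 2) (v : V) :
    (N2 (del E v)).card + kil E v = (N2 E).card := by
  rw [kil, add_comm]
  apply Finset.card_sdiff_add_card_eq_card
  intro x hx
  exact ((mem_N2_del h2).1 hx).1

theorem kil_eq {E : Finset (Finset V)} (h2 : ∀ v, dg E v ≤ 2) {v : V} {a b : Finset V}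
    (ha : a ∈ E) (hb : b ∈ E) (va : v ∈ a) (vb : v ∈ b) (hab : a ≠ b) :
    kil E v = (N2 E ∩ (a ∪ b)).card := by
  unfold kil
  congr 1
  ext x
  simp only [Finset.mem_sdiff, mem_N2_del h2, Finset.mem_inter, Finset.mem_union]
  constructor
  · rintro ⟨hx, h⟩
    refine ⟨hx, ?_⟩
    push Not at h
    obtain ⟨e, he, hv, xe⟩ := h hx
    rcases three_edges h2 ha hb he va vb hv hab with rfl | rfl <;> tauto
  · rintro ⟨hx, h⟩
    refine ⟨hx, fun h' => ?_⟩
    rcases h with h | h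
    · exact h'.2 a ha va h
    · exact h'.2 b hb vb h

theorem union_le_seven {v : V} {a b : Finset V} (ha : a.card = 4) (hb : b.card = 4)
    (va : v ∈ a) (vb : v ∈ b) : (a ∪ b).card ≤ 7 := by
  have := Finset.card_union_add_card_inter a b
  have : 0 < (a ∩ b).card := Finset.card_pos.2 ⟨v, by simp [va, vb]⟩
  omega

theorem kil_le_seven {E : Finset (Finset V)} (h4 : ∀ e ∈ E, e.card = 4)
    (h2 : ∀ v, dg E v ≤ 2) {v : V} (hv : v ∈ N2 E) : kil E v ≤ 7 := by
  obtain ⟨e, he, f, hf, hef, xe, xf⟩ := exists_of_mem_N2 hv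
  rw [kil_eq h2 he hf xe xf hef]
  exact (Finset.card_le_card Finset.inter_subset_right).trans
    (union_le_seven (h4 e he) (h4 f hf) xe xf)

theorem tight7 {E : Finset (Finset V)} (h4 : ∀ e ∈ E, e.card = 4)
    (h2 : ∀ v, dg E v ≤ 2) {a b f e : Finset V} (ha : a ∈ E) (hb : b ∈ E) (hf : f ∈ E)
    (he : e ∈ E) (hea : e ≠ a) (heb : e ≠ b) (hef : e ≠ f)
    {x : V} (xf : x ∈ f) (xe : x ∈ e)
    (hN : ∀ y ∈ e, y ∈ N2 E → y ∈ a ∪ b ∪ f)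
    (hmin : ∀ y ∈ N2 E, 7 ≤ kil E y) : False := by
  have small : ∀ g ∈ E, e ≠ g → (e ∩ g).card ≤ 1 := by
    intro g hg hne
    by_contra hc
    have : 0 < (e ∩ g).card := by omega
    obtain ⟨y, hy⟩ := Finset.card_pos.1 this
    rw [Finset.mem_inter] at hy
    have h7 := hmin y (mem_N2_of h2 he hg hy.1 hy.2 hne)
    rw [kil_eq h2 he hg hy.1 hy.2 hne] at h7
    have := Finset.card_le_card (Finset.inter_subset_right : N2 E ∩ (e ∪ g) ⊆ e ∪ g)
    have := Finset.card_union_add_card_inter e g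
    have := h4 e he
    have := h4 g hg
    omega
  have hall : e ⊆ N2 E := by
    have h7 := hmin x (mem_N2_of h2 he hf xe xf hef)
    rw [kil_eq h2 he hf xe xf hef] at h7
    have h8 := union_le_seven (h4 e he) (h4 f hf) xe xf
    have : N2 E ∩ (e ∪ f) = e ∪ f :=
      Finset.eq_of_subset_of_card_le Finset.inter_subset_right (by omega)
    intro y hy
    have : y ∈ N2 E ∩ (e ∪ f) := by rw [this]; simp [hy]
    exact (Finset.mem_inter.1 this).1
  have hsub : e ⊆ (e ∩ a) ∪ (e ∩ b) ∪ (e ∩ f) := by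
    intro y hy
    have := hN y hy (hall hy)
    simp only [Finset.mem_union, Finset.mem_inter] at this ⊢
    tauto
  have c := Finset.card_le_card hsub
  have c1 := Finset.card_union_le ((e ∩ a) ∪ (e ∩ b)) (e ∩ f)
  have c2 := Finset.card_union_le (e ∩ a) (e ∩ b)
  have := small a ha hea
  have := small b hb heb
  have := small f hf hef
  have := h4 e he
  omega

section tight6

variable {E : Finset (Finset V)}

theorem cnt6 (h4 : ∀ e ∈ E, e.card = 4)
    (h2 : ∀ v, dg E v ≤ 2) {a b f e : Finset V}
    (hf : f ∈ E) (he : e ∈ E) (hef : e ≠ f) {w x : V} (wf : w ∈ f)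
    (hw : ∀ g ∈ E, w ∈ g → g = f ∨ g = a ∨ g = b)
    (xf : x ∈ f) (xe : x ∈ e)
    (hN : ∀ y ∈ e, y ∈ N2 E → y ∈ a ∪ b ∪ f)
    (hmin : ∀ y ∈ N2 E, 6 ≤ kil E y) :
    2 ≤ (e ∩ (a ∪ b)).card ∧ 3 ≤ (e ∩ (a ∪ b)).card + (f ∩ (a ∪ b)).card := by
  have h6 := hmin x (mem_N2_of h2 he hf xe xf hef)
  rw [kil_eq h2 he hf xe xf hef] at h6
  have s1 : N2 E ∩ (e ∪ f) ⊆ (N2 E ∩ f) ∪ (e ∩ (a ∪ b)) := by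
    intro y hy
    simp only [Finset.mem_union, Finset.mem_inter] at hy ⊢
    have h := hN y
    simp only [Finset.mem_union] at h
    tauto
  have c1 := (Finset.card_le_card s1).trans (Finset.card_union_le _ _)
  have c2 := Finset.card_le_card (Finset.inter_subset_right : N2 E ∩ f ⊆ f)
  have s3 : N2 E ∩ f ⊆ (f.erase w) ∪ (f ∩ (a ∪ b)) := by
    intro y hy
    simp only [Finset.mem_union, Finset.mem_inter, Finset.mem_erase] at hy ⊢
    by_cases hyw : y = w
    · subst hyw
      obtain ⟨g, hg, g', hg', hgg, yg, yg'⟩ := exists_of_mem_N2 hy.1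
      right
      refine ⟨wf, ?_⟩
      rcases hw g hg yg with rfl | rfl | rfl
      · rcases hw g' hg' yg' with rfl | rfl | rfl
        · exact absurd rfl hgg
        · exact Or.inl yg'
        · exact Or.inr yg'
      · exact Or.inl yg
      · exact Or.inr yg
    · exact Or.inl ⟨hyw, hy.2⟩
  have c3 := (Finset.card_le_card s3).trans (Finset.card_union_le _ _)
  rw [Finset.card_erase_of_mem wf] at c3
  have := h4 f hf
  omega

theorem disj_ab (h2 : ∀ v, dg E v ≤ 2) {a b e f : Finset V} (ha : a ∈ E) (hb : b ∈ E)
    (he : e ∈ E) (hf : f ∈ E) (hea : e ≠ a) (heb : e ≠ b) (hfa : f ≠ a) (hfb : f ≠ b)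
    (hef : e ≠ f) : Disjoint (e ∩ (a ∪ b)) (f ∩ (a ∪ b)) := by
  rw [Finset.disjoint_left]
  intro y hy hy'
  simp only [Finset.mem_inter, Finset.mem_union] at hy hy'
  rcases hy.2 with h | h
  · rcases three_edges h2 he hf ha hy.1 hy'.1 h hef with h | h
    · exact hea h.symm
    · exact hfa h.symm
  · rcases three_edges h2 he hf hb hy.1 hy'.1 h hef with h | h
    · exact heb h.symm
    · exact hfb h.symm

theorem disj_ab' (h2 : ∀ v, dg E v ≤ 2) {a b e : Finset V} (ha : a ∈ E) (hb : b ∈ E)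
    (he : e ∈ E) (hea : e ≠ a) (heb : e ≠ b) (hab : a ≠ b) :
    Disjoint (e ∩ (a ∪ b)) (a ∩ b) := by
  rw [Finset.disjoint_left]
  intro y hy hy'
  simp only [Finset.mem_inter, Finset.mem_union] at hy hy'
  rcases three_edges h2 ha hb he hy'.1 hy'.2 hy.1 hab with h | h
  · exact hea h
  · exact heb h

theorem sub_N (h2 : ∀ v, dg E v ≤ 2) {a b e : Finset V} (ha : a ∈ E) (hb : b ∈ E)
    (he : e ∈ E) (hea : e ≠ a) (heb : e ≠ b) :
    e ∩ (a ∪ b) ⊆ N2 E ∩ (a ∪ b) := by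
  intro y hy
  simp only [Finset.mem_inter, Finset.mem_union] at hy ⊢
  refine ⟨?_, hy.2⟩
  rcases hy.2 with h | h
  · exact mem_N2_of h2 he ha hy.1 h hea
  · exact mem_N2_of h2 he hb hy.1 h heb

theorem sub_N' (h2 : ∀ v, dg E v ≤ 2) {a b : Finset V} (ha : a ∈ E) (hb : b ∈ E)
    (hab : a ≠ b) : a ∩ b ⊆ N2 E ∩ (a ∪ b) := by
  intro y hy
  simp only [Finset.mem_inter, Finset.mem_union] at hy ⊢
  exact ⟨mem_N2_of h2 ha hb hy.1 hy.2 hab, Or.inl hy.1⟩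

theorem card_four_disjoint {A B C D S : Finset V} (hA : A ⊆ S) (hB : B ⊆ S) (hC : C ⊆ S)
    (hD : D ⊆ S) (h1 : Disjoint A B) (h2 : Disjoint A C) (h3 : Disjoint A D)
    (h4 : Disjoint B C) (h5 : Disjoint B D) (h6 : Disjoint C D) :
    A.card + B.card + C.card + D.card ≤ S.card := by
  rw [← Finset.card_union_of_disjoint h1,
    ← Finset.card_union_of_disjoint (Finset.disjoint_union_left.2 ⟨h2, h4⟩),
    ← Finset.card_union_of_disjoint
      (Finset.disjoint_union_left.2 ⟨Finset.disjoint_union_left.2 ⟨h3, h5⟩, h6⟩)]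
  exact Finset.card_le_card (Finset.union_subset (Finset.union_subset
    (Finset.union_subset hA hB) hC) hD)

/-- the case where two of the neighbouring edges coincide -/
theorem tight6_two (h4 : ∀ e ∈ E, e.card = 4)
    (h2 : ∀ v, dg E v ≤ 2) {a b f g h : Finset V} (ha : a ∈ E) (hb : b ∈ E) (hf : f ∈ E)
    (hab : a ≠ b) (hfa : f ≠ a) (hfb : f ≠ b)
    (hg : g ∈ E) (hga : g ≠ a) (hgb : g ≠ b) (hgf : g ≠ f)
    (hh : h ∈ E) (hha : h ≠ a) (hhb : h ≠ b) (hhf : h ≠ f) (hgh : g ≠ h)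
    {v w x1 x2 x3 : V} (va : v ∈ a) (vb : v ∈ b)
    (hf' : f = {w, x1, x2, x3}) (h12 : x1 ≠ x2)
    (hw : ∀ g ∈ E, w ∈ g → g = f ∨ g = a ∨ g = b)
    (x1g : x1 ∈ g) (x2g : x2 ∈ g) (x3h : x3 ∈ h)
    (hNg : ∀ y ∈ g, y ∈ N2 E → y ∈ a ∪ b ∪ f)
    (hNh : ∀ y ∈ h, y ∈ N2 E → y ∈ a ∪ b ∪ f)
    (hmin : ∀ y ∈ N2 E, 6 ≤ kil E y) (hv : kil E v ≤ 6) : False := by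
  have wf : w ∈ f := by simp [hf']
  have x1f : x1 ∈ f := by simp [hf']
  have x2f : x2 ∈ f := by simp [hf']
  have x3f : x3 ∈ f := by simp [hf']
  have cg := cnt6 h4 h2 hf hg hgf wf hw x1f x1g hNg hmin
  have ch := cnt6 h4 h2 hf hh hhf wf hw x3f x3h hNh hmin
  rw [kil_eq h2 ha hb va vb hab] at hv
  have tot := card_four_disjoint (sub_N h2 ha hb hg hga hgb) (sub_N h2 ha hb hh hha hhb)
    (sub_N h2 ha hb hf hfa hfb) (sub_N' h2 ha hb hab)
    (disj_ab h2 ha hb hg hh hga hgb hha hhb hgh) (disj_ab h2 ha hb hg hf hga hgb hfa hfb hgf)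
    (disj_ab' h2 ha hb hg hga hgb hab) (disj_ab h2 ha hb hh hf hha hhb hfa hfb hhf)
    (disj_ab' h2 ha hb hh hha hhb hab) (disj_ab' h2 ha hb hf hfa hfb hab)
  have pab : 0 < (a ∩ b).card := Finset.card_pos.2 ⟨v, by simp [va, vb]⟩
  have notab : ∀ y, y ∈ g → y ∈ f → y ∉ a ∪ b := by
    intro y yg yf hy
    have := Finset.disjoint_left.1 (disj_ab h2 ha hb hg hf hga hgb hfa hfb hgf)
      (Finset.mem_inter.2 ⟨yg, hy⟩)
    exact this (Finset.mem_inter.2 ⟨yf, hy⟩)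
  have g2 : (g ∩ (a ∪ b)).card ≤ 2 := by
    have : g ∩ (a ∪ b) ⊆ (g.erase x1).erase x2 := by
      intro y hy
      rw [Finset.mem_inter] at hy
      simp only [Finset.mem_erase]
      refine ⟨?_, ?_, hy.1⟩
      · rintro rfl; exact notab y x2g x2f hy.2
      · rintro rfl; exact notab y x1g x1f hy.2
    have := Finset.card_le_card this
    rw [Finset.card_erase_of_mem (by simp [x2g, h12.symm]), Finset.card_erase_of_mem x1g,
      h4 g hg] at this
    omega
  have hNh3 : (N2 E ∩ h).card ≤ 3 := by
    have : N2 E ∩ h ⊆ {x3} ∪ (h ∩ (a ∪ b)) := by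
      intro y hy
      rw [Finset.mem_inter] at hy
      have hy' := hNh y hy.2 hy.1
      rw [Finset.mem_union] at hy'
      rw [Finset.mem_union, Finset.mem_singleton, Finset.mem_inter]
      rcases hy' with h' | h'
      · right; exact ⟨hy.2, h'⟩
      · left
        rw [hf'] at h'
        simp only [Finset.mem_insert, Finset.mem_singleton] at h'
        rcases h' with rfl | rfl | rfl | rfl
        · rcases hw h hh hy.2 with h' | h' | h'
          · exact absurd h' hhf
          · exact absurd h' hha
          · exact absurd h' hhb
        · rcases three_edges h2 hg hf hh x1g x1f hy.2 hgf with h' | h'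
          · exact absurd h'.symm hgh
          · exact absurd h' hhf
        · rcases three_edges h2 hg hf hh x2g x2f hy.2 hgf with h' | h'
          · exact absurd h'.symm hgh
          · exact absurd h' hhf
        · rfl
    have := (Finset.card_le_card this).trans (Finset.card_union_le _ _)
    rw [Finset.card_singleton] at this
    omega
  have key : ∀ c ∈ E, h ≠ c → (h ∩ c).card = 0 ∨ (h ∩ c).card + 3 ≤ (N2 E ∩ c).card := by
    intro c hc hne
    rcases Nat.eq_zero_or_pos (h ∩ c).card with h0 | h0
    · exact Or.inl h0
    right
    obtain ⟨p, hp⟩ := Finset.card_pos.1 h0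
    rw [Finset.mem_inter] at hp
    have h6 := hmin p (mem_N2_of h2 hh hc hp.1 hp.2 hne)
    rw [kil_eq h2 hh hc hp.1 hp.2 hne, Finset.inter_union_distrib_left] at h6
    have e1 := Finset.card_union_add_card_inter (N2 E ∩ h) (N2 E ∩ c)
    have e2 : h ∩ c ⊆ (N2 E ∩ h) ∩ (N2 E ∩ c) := by
      intro y hy
      rw [Finset.mem_inter] at hy
      have := mem_N2_of h2 hh hc hy.1 hy.2 hne
      simp [hy, this]
    have e3 := Finset.card_le_card e2
    omega
  have ka := key a ha hha
  have kb := key b hb hhb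
  have na := Finset.card_le_card (Finset.inter_subset_right : N2 E ∩ a ⊆ a)
  have nb := Finset.card_le_card (Finset.inter_subset_right : N2 E ∩ b ⊆ b)
  rw [h4 a ha] at na
  rw [h4 b hb] at nb
  have u1 : (h ∩ (a ∪ b)).card ≤ (h ∩ a).card + (h ∩ b).card := by
    rw [Finset.inter_union_distrib_left]; exact Finset.card_union_le _ _
  have u2 := Finset.card_union_add_card_inter (N2 E ∩ a) (N2 E ∩ b)
  rw [← Finset.inter_union_distrib_left] at u2
  have u3 : (N2 E ∩ a) ∩ (N2 E ∩ b) ⊆ a ∩ b := by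
    intro y hy
    simp only [Finset.mem_inter] at hy ⊢
    tauto
  have u4 := Finset.card_le_card u3
  omega

theorem tight6 (h4 : ∀ e ∈ E, e.card = 4)
    (h2 : ∀ v, dg E v ≤ 2) {a b f : Finset V} (ha : a ∈ E) (hb : b ∈ E) (hf : f ∈ E)
    (hab : a ≠ b) (hfa : f ≠ a) (hfb : f ≠ b)
    {v w x1 x2 x3 : V} (va : v ∈ a) (vb : v ∈ b)
    (hf' : f = {w, x1, x2, x3}) (h12 : x1 ≠ x2) (h13 : x1 ≠ x3) (h23 : x2 ≠ x3)
    (hw : ∀ g ∈ E, w ∈ g → g = f ∨ g = a ∨ g = b)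
    {e1 e2 e3 : Finset V}
    (he1 : e1 ∈ E ∧ x1 ∈ e1 ∧ e1 ≠ a ∧ e1 ≠ b ∧ e1 ≠ f)
    (he2 : e2 ∈ E ∧ x2 ∈ e2 ∧ e2 ≠ a ∧ e2 ≠ b ∧ e2 ≠ f)
    (he3 : e3 ∈ E ∧ x3 ∈ e3 ∧ e3 ≠ a ∧ e3 ≠ b ∧ e3 ≠ f)
    (hN1 : ∀ y ∈ e1, y ∈ N2 E → y ∈ a ∪ b ∪ f)
    (hN2 : ∀ y ∈ e2, y ∈ N2 E → y ∈ a ∪ b ∪ f)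
    (hN3 : ∀ y ∈ e3, y ∈ N2 E → y ∈ a ∪ b ∪ f)
    (hmin : ∀ y ∈ N2 E, 6 ≤ kil E y) (hv : kil E v ≤ 6) : False := by
  obtain ⟨m1, y1, p1, q1, r1⟩ := he1
  obtain ⟨m2, y2, p2, q2, r2⟩ := he2
  obtain ⟨m3, y3, p3, q3, r3⟩ := he3
  have wf : w ∈ f := by simp [hf']
  have x1f : x1 ∈ f := by simp [hf']
  have x2f : x2 ∈ f := by simp [hf']
  have x3f : x3 ∈ f := by simp [hf']
  by_cases e12 : e1 = e2
  · subst e12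
    by_cases e13 : e1 = e3
    · subst e13
      have c1 := cnt6 h4 h2 hf m1 r1 wf hw x1f y1 hN1 hmin
      have notab : ∀ y, y ∈ e1 → y ∈ f → y ∉ a ∪ b := by
        intro y yg yf hy
        have := Finset.disjoint_left.1 (disj_ab h2 ha hb m1 hf p1 q1 hfa hfb r1)
          (Finset.mem_inter.2 ⟨yg, hy⟩)
        exact this (Finset.mem_inter.2 ⟨yf, hy⟩)
      have : e1 ∩ (a ∪ b) ⊆ ((e1.erase x1).erase x2).erase x3 := by
        intro y hy
        rw [Finset.mem_inter] at hy
        simp only [Finset.mem_erase]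
        refine ⟨?_, ?_, ?_, hy.1⟩
        · rintro rfl; exact notab y y3 x3f hy.2
        · rintro rfl; exact notab y y2 x2f hy.2
        · rintro rfl; exact notab y y1 x1f hy.2
      have := Finset.card_le_card this
      rw [Finset.card_erase_of_mem (by simp [y3, h13.symm, h23.symm]),
        Finset.card_erase_of_mem (by simp [y2, h12.symm]), Finset.card_erase_of_mem y1,
        h4 e1 m1] at this
      omega
    · exact tight6_two h4 h2 ha hb hf hab hfa hfb m1 p1 q1 r1 m3 p3 q3 r3 e13 va vb hf' h12 hw
        y1 y2 y3 hN1 hN3 hmin hv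
  by_cases e13 : e1 = e3
  · subst e13
    exact tight6_two h4 h2 ha hb hf hab hfa hfb m1 p1 q1 r1 m2 p2 q2 r2 e12 va vb
      (x1 := x1) (x2 := x3) (x3 := x2) (by rw [hf']; ext; simp; tauto) h13 hw
      y1 y3 y2 hN1 hN2 hmin hv
  by_cases e23 : e2 = e3
  · subst e23
    exact tight6_two h4 h2 ha hb hf hab hfa hfb m2 p2 q2 r2 m1 p1 q1 r1 (Ne.symm e12) va vb
      (x1 := x2) (x2 := x3) (x3 := x1) (by rw [hf']; ext; simp; tauto) h23 hw
      y2 y3 y1 hN2 hN1 hmin hv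
  have c1 := cnt6 h4 h2 hf m1 r1 wf hw x1f y1 hN1 hmin
  have c2 := cnt6 h4 h2 hf m2 r2 wf hw x2f y2 hN2 hmin
  have c3 := cnt6 h4 h2 hf m3 r3 wf hw x3f y3 hN3 hmin
  rw [kil_eq h2 ha hb va vb hab] at hv
  have tot := card_four_disjoint (sub_N h2 ha hb m1 p1 q1) (sub_N h2 ha hb m2 p2 q2)
    (sub_N h2 ha hb m3 p3 q3) (sub_N' h2 ha hb hab)
    (disj_ab h2 ha hb m1 m2 p1 q1 p2 q2 e12) (disj_ab h2 ha hb m1 m3 p1 q1 p3 q3 e13)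
    (disj_ab' h2 ha hb m1 p1 q1 hab) (disj_ab h2 ha hb m2 m3 p2 q2 p3 q3 e23)
    (disj_ab' h2 ha hb m2 p2 q2 hab) (disj_ab' h2 ha hb m3 p3 q3 hab)
  have pab : 0 < (a ∩ b).card := Finset.card_pos.2 ⟨v, by simp [va, vb]⟩
  omega

end tight6

/-- If Staller's reply `w` has degree one, destroys three degree-two vertices and
leaves no cheap edge-pair, then the first move was cheap. -/
theorem tight {E : Finset (Finset V)} (h4 : ∀ e ∈ E, e.card = 4)
    (h2 : ∀ v, dg E v ≤ 2) {v w : V} (hv : v ∈ N2 E)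
    (hmin : ∀ y ∈ N2 E, kil E v ≤ kil E y) (hk : 6 ≤ kil E v)
    (hw : dg (del E v) w = 1) (hw3 : 3 ≤ kil (del E v) w)
    (hno : ∀ y ∈ N2 (del (del E v) w), 7 ≤ kil (del (del E v) w) y) : False := by
  have h2' : ∀ y, dg (del E v) y ≤ 2 := fun y => (dg_del_le _ _ _).trans (h2 y)
  have h2'' : ∀ y, dg (del (del E v) w) y ≤ 2 := fun y => (dg_del_le _ _ _).trans (h2' y)
  obtain ⟨a, ha, b, hb, hab, va, vb⟩ := exists_of_mem_N2 hv
  obtain ⟨f, hfw⟩ := Finset.card_eq_one.1 hw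
  have hfE : ∀ g, g ∈ E → v ∉ g → w ∈ g → g = f := by
    intro g hg hvg hwg
    have : g ∈ (del E v).filter (fun e => w ∈ e) := by simp [mem_del, hg, hvg, hwg]
    rw [hfw] at this
    simpa using this
  have hf0 : f ∈ (del E v).filter (fun e => w ∈ e) := by rw [hfw]; simp
  simp only [Finset.mem_filter, mem_del] at hf0
  obtain ⟨⟨hf, vf⟩, wf⟩ := hf0
  have hvab : ∀ g ∈ E, v ∈ g → g = a ∨ g = b := fun g hg hvg =>
    three_edges h2 ha hb hg va vb hvg hab
  -- destroyed vertices
  have hsub : N2 (del E v) \ N2 (del (del E v) w) ⊆ f.erase w := by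
    intro x hx
    rw [Finset.mem_sdiff, mem_N2_del h2'] at hx
    push Not at hx
    obtain ⟨hx1, hx2⟩ := hx
    obtain ⟨e, he, hwe, hxe⟩ := hx2 hx1
    rw [mem_del] at he
    have := hfE e he.1 he.2 hwe
    subst this
    refine Finset.mem_erase.2 ⟨?_, hxe⟩
    rintro rfl
    rw [mem_N2] at hx1
    omega
  have hc : (f.erase w).card = 3 := by rw [Finset.card_erase_of_mem wf, h4 f hf]
  have heq : N2 (del E v) \ N2 (del (del E v) w) = f.erase w :=
    Finset.eq_of_subset_of_card_le hsub (by rw [hc]; exact hw3)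
  have hfa : f ≠ a := by rintro rfl; exact vf va
  have hfb : f ≠ b := by rintro rfl; exact vf vb
  have other : ∀ x ∈ f.erase w, ∃ e, (e ∈ E ∧ x ∈ e ∧ e ≠ a ∧ e ≠ b ∧ e ≠ f) ∧
      ∀ y ∈ e, y ∈ N2 E → y ∈ a ∪ b ∪ f := by
    intro x hx
    have xf : x ∈ f := Finset.mem_of_mem_erase hx
    rw [← heq, Finset.mem_sdiff] at hx
    obtain ⟨e, he, hef, xe⟩ : ∃ e ∈ del E v, e ≠ f ∧ x ∈ e := by
      obtain ⟨e, he, e', he', hee, xe, xe'⟩ := exists_of_mem_N2 hx.1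
      by_cases h : e = f
      · exact ⟨e', he', fun h' => hee (h.trans h'.symm), xe'⟩
      · exact ⟨e, he, h, xe⟩
    rw [mem_del] at he
    refine ⟨e, ⟨he.1, xe, ?_, ?_, hef⟩, ?_⟩
    · rintro rfl; exact he.2 va
    · rintro rfl; exact he.2 vb
    intro y hy hyN
    by_contra hyc
    simp only [Finset.mem_union] at hyc
    push Not at hyc
    have hyN' : y ∈ N2 (del (del E v) w) := by
      rw [mem_N2_del h2', mem_N2_del h2]
      refine ⟨⟨hyN, ?_⟩, ?_⟩
      · intro g hg hvg hyg
        rcases hvab g hg hvg with rfl | rfl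
        · exact hyc.1.1 hyg
        · exact hyc.1.2 hyg
      · intro g hg hwg hyg
        rw [mem_del] at hg
        have := hfE g hg.1 hg.2 hwg
        subst this
        exact hyc.2 hyg
    have h7 := hno y hyN'
    have heD : e ∈ del (del E v) w :=
      mem_del.2 ⟨mem_del.2 he, fun hwe => hef (hfE e he.1 he.2 hwe)⟩
    obtain ⟨e', he', hee, ye'⟩ : ∃ e' ∈ del (del E v) w, e ≠ e' ∧ y ∈ e' := by
      obtain ⟨g, hg, g', hg', hgg, yg, yg'⟩ := exists_of_mem_N2 hyN'
      by_cases h : e = g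
      · exact ⟨g', hg', fun h' => hgg (h.symm.trans h'), yg'⟩
      · exact ⟨g, hg, h, yg⟩
    rw [kil_eq h2'' heD he' hy ye' hee] at h7
    have h8 := union_le_seven (h4 e he.1) (h4 e' (mem_del.1 (mem_del.1 he').1).1) hy ye'
    have : N2 (del (del E v) w) ∩ (e ∪ e') ⊆ (e ∪ e').erase x := by
      intro z hz
      rw [Finset.mem_inter] at hz
      refine Finset.mem_erase.2 ⟨?_, hz.2⟩
      rintro rfl
      exact hx.2 hz.1
    have h9 := Finset.card_le_card this
    rw [Finset.card_erase_of_mem (by simp [xe])] at h9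
    omega
  obtain ⟨x1, x2, x3, h12, h13, h23, hx⟩ := Finset.card_eq_three.1 hc
  obtain ⟨e1, he1, hN1⟩ := other x1 (by simp [hx])
  obtain ⟨e2, he2, hN2⟩ := other x2 (by simp [hx])
  obtain ⟨e3, he3, hN3⟩ := other x3 (by simp [hx])
  have hf' : f = {w, x1, x2, x3} := by rw [← hx, Finset.insert_erase wf]
  by_cases h7 : 7 ≤ kil E v
  · exact tight7 h4 h2 ha hb hf he1.1 he1.2.2.1 he1.2.2.2.1 he1.2.2.2.2
      (x := x1) (by simp [hf']) he1.2.1 hN1 (fun y hy => h7.trans (hmin y hy))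
  · refine tight6 h4 h2 ha hb hf hab hfa hfb va vb hf' h12 h13 h23 ?_ he1 he2 he3 hN1 hN2 hN3
      (fun y hy => hk.trans (hmin y hy)) (by omega)
    intro g hg hwg
    by_cases hvg : v ∈ g
    · exact Or.inr (hvab g hg hvg)
    · exact Or.inl (hfE g hg hvg hwg)

theorem kil_le_three {E : Finset (Finset V)} (h4 : ∀ e ∈ E, e.card = 4)
    (h2 : ∀ v, dg E v ≤ 2) {w : V} (hw : dg E w = 1) : kil E w ≤ 3 := by
  obtain ⟨f, hfw⟩ := Finset.card_eq_one.1 hw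
  have hf0 : f ∈ E.filter (fun e => w ∈ e) := by rw [hfw]; simp
  rw [Finset.mem_filter] at hf0
  have hsub : N2 E \ N2 (del E w) ⊆ f.erase w := by
    intro x hx
    rw [Finset.mem_sdiff, mem_N2_del h2] at hx
    push Not at hx
    obtain ⟨hx1, hx2⟩ := hx
    obtain ⟨e, he, hwe, hxe⟩ := hx2 hx1
    have : e ∈ E.filter (fun e => w ∈ e) := by simp [he, hwe]
    rw [hfw, Finset.mem_singleton] at this
    subst this
    refine Finset.mem_erase.2 ⟨?_, hxe⟩
    rintro rfl
    rw [mem_N2] at hx1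
    omega
  have := Finset.card_le_card hsub
  rw [Finset.card_erase_of_mem hf0.2, h4 f hf0.1] at this
  exact this

theorem phase2 : ∀ n, ∀ E : Finset (Finset V), E.card ≤ n → (∀ e ∈ E, e.card = 4) →
    (∀ v, dg E v ≤ 2) →
    9 * gameVal true E + (N2 E).card ≤ 9 * E.card ∧
    ((∃ y ∈ N2 E, kil E y ≤ 6) → 9 * gameVal true E + (N2 E).card + 1 ≤ 9 * E.card) := by
  intro n
  induction n with
  | zero =>
    intro E hE h4 h2
    have : E = ∅ := Finset.card_eq_zero.1 (by omega)
    subst this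
    have h0 : gameVal true (∅ : Finset (Finset V)) = 0 := gv_true_zero (by simp [playable])
    have h1 : N2 (∅ : Finset (Finset V)) = ∅ := by simp [N2, dg]
    simp [h0, h1]
  | succ n ih =>
    intro E hE h4 h2
    rcases (N2 E).eq_empty_or_nonempty with h0 | hne
    · have := gv_le_card _ E le_rfl
      rw [h0]
      simp
      exact this
    obtain ⟨v, hv, hmin⟩ := Finset.exists_min_image (N2 E) (kil E) hne
    have dv := mem_N2.1 hv
    have hvp : v ∈ playable E := playable_of_dg (by omega)
    have c1 := card_del E v
    have k1 := kil_add h2 v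
    have k7 := kil_le_seven h4 h2 hv
    have h2' : ∀ y, dg (del E v) y ≤ 2 := fun y => (dg_del_le _ _ _).trans (h2 y)
    have h4' : ∀ e ∈ del E v, e.card = 4 := fun e he => h4 e (mem_del.1 he).1
    suffices hs : 9 * gameVal true E + (N2 E).card ≤ 9 * E.card ∧
        (kil E v ≤ 6 → 9 * gameVal true E + (N2 E).card + 1 ≤ 9 * E.card) by
      refine ⟨hs.1, ?_⟩
      rintro ⟨y, hy, hy6⟩
      exact hs.2 ((hmin y hy).trans hy6)
    have hA := ih (del E v) (by omega) h4' h2'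
    rcases game_round hvp with h1 | ⟨w, hw, h1⟩
    · omega
    have d2 := dg_pos hw
    have c2 := card_del (del E v) w
    have k2 := kil_add h2' w
    have h2'' : ∀ y, dg (del (del E v) w) y ≤ 2 := fun y => (dg_del_le _ _ _).trans (h2' y)
    have h4'' : ∀ e ∈ del (del E v) w, e.card = 4 := fun e he => h4' e (mem_del.1 he).1
    have hB := ih (del (del E v) w) (by omega) h4'' h2''
    have d22 := h2' w
    by_cases hd : dg (del E v) w = 1
    · have k3 := kil_le_three h4' h2' hd
      by_cases hno : ∃ y ∈ N2 (del (del E v) w), kil (del (del E v) w) y ≤ 6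
      · have := hB.2 hno
        omega
      · push Not at hno
        by_cases h6 : 6 ≤ kil E v
        · by_cases h3 : 3 ≤ kil (del E v) w
          · exact (tight h4 h2 hv hmin h6 hd h3 (fun y hy => hno y hy)).elim
          · omega
        · omega
    · have hwN : w ∈ N2 (del E v) := mem_N2.2 (by omega)
      have k7' := kil_le_seven h4' h2' hwN
      omega

theorem phase2' {E : Finset (Finset V)} (h4 : ∀ e ∈ E, e.card = 4) (h2 : ∀ v, dg E v ≤ 2) :
    27 * gameVal true E ≤ 5 * (playable E).card + 11 * E.card := by
  have h := (phase2 _ E le_rfl h4 h2).1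
  have hs := sum_dg h4
  have : ∑ v ∈ playable E, dg E v ≤ (playable E).card + (N2 E).card := by
    have e1 : ∀ v ∈ playable E, dg E v ≤ 1 + (if v ∈ N2 E then 1 else 0) := by
      intro v _
      have := h2 v
      split_ifs with hv
      · omega
      · rw [mem_N2] at hv; omega
    refine (Finset.sum_le_sum e1).trans ?_
    rw [Finset.sum_add_distrib, Finset.sum_boole]
    simp only [Finset.sum_const, smul_eq_mul, mul_one, Nat.cast_id]
    apply Nat.add_le_add_left
    apply Finset.card_le_card
    intro x hx
    exact (Finset.mem_filter.1 hx).2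
  have h3 : (N2 E).card ≤ (playable E).card := by
    apply Finset.card_le_card
    intro x hx
    rw [mem_N2] at hx
    exact playable_of_dg (by omega)
  have h5 : (playable E).card + (N2 E).card ≤ ∑ v ∈ playable E, dg E v := by
    have e1 : ∀ v ∈ playable E, 1 + (if v ∈ N2 E then 1 else 0) ≤ dg E v := by
      intro v hvp
      have := dg_pos hvp
      split_ifs with hv
      · rw [mem_N2] at hv; omega
      · omega
    refine le_trans ?_ (Finset.sum_le_sum e1)
    rw [Finset.sum_add_distrib, Finset.sum_boole]
    simp only [Finset.sum_const, smul_eq_mul, mul_one, Nat.cast_id]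
    apply Nat.add_le_add_left
    apply Finset.card_le_card
    intro x hx
    refine Finset.mem_filter.2 ⟨?_, hx⟩
    rw [mem_N2] at hx
    exact playable_of_dg (by omega)
  omega

theorem phase3 {E : Finset (Finset V)} (h4 : ∀ e ∈ E, e.card = 4) (h3 : ∀ v, dg E v ≤ 3) :
    27 * gameVal true E ≤ 5 * (playable E).card + 11 * E.card := by
  refine linear_phase 5 11 27 3 3 (by norm_num) (by norm_num) ?_ _ E le_rfl h4 h3
  intro E h4 h3 _
  exact phase2' h4 (fun v => Nat.le_of_lt_succ (h3 v))

theorem phase4 {E : Finset (Finset V)} (h4 : ∀ e ∈ E, e.card = 4) (hd : ∀ v, dg E v ≤ 4) :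
    756 * gameVal true E ≤ 206 * (playable E).card + 220 * E.card := by
  refine linear_phase 206 220 756 4 4 (by norm_num) (by norm_num) ?_ _ E le_rfl h4 hd
  intro E h4 h3 _
  have h3' : ∀ v, dg E v ≤ 3 := fun v => Nat.le_of_lt_succ (h3 v)
  have := phase3 h4 h3'
  have := edges_le h4 h3'
  omega

theorem phase5 {E : Finset (Finset V)} (h4 : ∀ e ∈ E, e.card = 4) :
    252 * gameVal true E ≤ 71 * (playable E).card + 71 * E.card := by
  refine linear_phase 71 71 252 5 E.card (by norm_num) (by norm_num) ?_ _ E le_rfl h4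
    (fun v => Finset.card_le_card (Finset.filter_subset _ _))
  intro E h4 h3 _
  have h3' : ∀ v, dg E v ≤ 4 := fun v => Nat.le_of_lt_succ (h3 v)
  have := phase4 h4 h3'
  have := edges_le h4 h3'
  omega

/-- If `H` is a `4`-uniform hypergraph, then
`τ_g'(H) ≤ (1/252)(71 n(H) + 71 m(H) + 110)`. -/
theorem stallerGameTransversalNum_le_of_four_uniform
    {V : Type} [Fintype V] [DecidableEq V] (E : Finset (Finset V))
    (h4 : ∀ e ∈ E, e.card = 4) :
    (stallerGameTransversalNum E : ℚ) ≤
      (1 / 252) * (71 * Fintype.card V + 71 * E.card + 110) := by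
  have key : 252 * stallerGameTransversalNum E ≤ 71 * Fintype.card V + 71 * E.card + 110 := by
    unfold stallerGameTransversalNum
    rcases gv_false_cases E with h0 | ⟨w, hw, h0⟩
    · omega
    · have h5 := phase5 (E := del E w) (fun e he => h4 e (mem_del.1 he).1)
      have := playable_del hw
      have := dg_pos hw
      have := card_del E w
      have : (playable E).card ≤ Fintype.card V := Finset.card_le_univ _
      omega
  have key' : (252 : ℚ) * stallerGameTransversalNum E ≤
      71 * Fintype.card V + 71 * E.card + 110 := by exact_mod_cast key
  linarith
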